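/- arXiv:1604.06997 — 2 statements merged into one kernel-verified Lean document; each statement's English description precedes it below -/
import Mathlib

section
/- Fix a decomposition tree of X. Let r ∈ X with B′ := RT(r) not the root, and let B be the parent of B′ in the decomposition tree. Then every point s added by GREEDY while processing r satisfies: s ∈ BOX(B), or Left(B) exists and s is below Left(B) (key(s) = key(Left(B)) and time(s) > time(Left(B))), or Right(B) exists and s is below Right(B). -/
open Finset

attribute [local instance] Classical.propDecidable

/-- A point in the plane: first coordinate is the key, second is the time. -/
abbrev Pt : Type := ℤ × ℤ

/-- `r` lies in the closed axis-parallel rectangle with opposite corners `p` and `q`. -/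
def inRect (p q r : Pt) : Prop :=
  min p.1 q.1 ≤ r.1 ∧ r.1 ≤ max p.1 q.1 ∧ min p.2 q.2 ≤ r.2 ∧ r.2 ≤ max p.2 q.2

/-- `r` lies in the open axis-parallel rectangle with opposite corners `p` and `q`. -/
def inOpenRect (p q r : Pt) : Prop :=
  min p.1 q.1 < r.1 ∧ r.1 < max p.1 q.1 ∧ min p.2 q.2 < r.2 ∧ r.2 < max p.2 q.2

/-- `S` is an arborally satisfied set. -/
def ArbSat (S : Finset Pt) : Prop :=
  ∀ p ∈ S, ∀ q ∈ S, p.1 = q.1 ∨ p.2 = q.2 ∨ ∃ r ∈ S, r ≠ p ∧ r ≠ q ∧ inRect p q r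

/-- `X` is the permutation point set `{(σ(t), t) : 1 ≤ t ≤ n}` of some permutation `σ` of
`{1, …, n}`. -/
def IsPermPointSet (n : ℕ) (X : Finset Pt) : Prop :=
  ∃ σ : Equiv.Perm (Fin n),
    X = Finset.univ.image (fun t : Fin n => ((((σ t : ℕ) : ℤ) + 1, ((t : ℕ) : ℤ) + 1) : Pt))

/-- The points added by GREEDY at time `t`, given the point set `X` and the set `G` of points
added before time `t`: for the point `p` of `X` with time `t` and each point `q` of time `< t`
with a different key such that the rectangle spanned by `p` and `q` contains no other point of
time `< t`, the point `(key q, t)` is added. -/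
noncomputable def greedyStep (X G : Finset Pt) (t : ℤ) : Finset Pt :=
  (X.filter (fun p => p.2 = t)).biUnion (fun p =>
    (((X ∪ G).filter (fun s => s.2 < t)).filter (fun q =>
      q.1 ≠ p.1 ∧ ∀ r ∈ (X ∪ G).filter (fun s => s.2 < t), inRect p q r → r = q)).image
      (fun q => ((q.1, t) : Pt)))

/-- All points added by GREEDY while processing times `1, …, t`. -/
noncomputable def greedyUpTo (X : Finset Pt) : ℕ → Finset Pt
  | 0 => ∅
  | t + 1 => greedyUpTo X t ∪ greedyStep X (greedyUpTo X t) ((t : ℤ) + 1)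

/-- The set `G` of points added by GREEDY over the whole execution on a permutation point set
`X` of size `n`. -/
noncomputable def greedyG (n : ℕ) (X : Finset Pt) : Finset Pt := greedyUpTo X n

/-- `OP r` is the point of `X` processed at the time at which `r` was added; for `r ∈ X`,
`OP r = r`. -/
noncomputable def OP (X : Finset Pt) (r : Pt) : Pt :=
  ((X.filter (fun p => p.2 = r.2)).toList).headI

/-- The first point of `S` above `p`: the point of `S` with the same key as `p`, smaller time,
and the largest such time. -/
noncomputable def firstAbove (S : Finset Pt) (p : Pt) : Pt :=
  (p.1, (((S.filter (fun q => q.1 = p.1 ∧ q.2 < p.2)).image Prod.snd).max).unbotD 0)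

/-- The pair `CP(p) = (OP(p), OP(q))` where `q` is the first point of `X ∪ G` above `p`. -/
noncomputable def CP (X G : Finset Pt) (p : Pt) : Pt × Pt :=
  (OP X p, OP X (firstAbove (X ∪ G) p))

/-- `CP(p) ∈ MMC` (*zig*). -/
def inMMC (X G : Finset Pt) (p : Pt) : Prop :=
  ((CP X G p).1.1 < p.1 ∧ (CP X G p).2.1 < (CP X G p).1.1 ∧ (CP X G p).2.2 < (CP X G p).1.2)
  ∨ (p.1 < (CP X G p).1.1 ∧ (CP X G p).1.1 < (CP X G p).2.1 ∧ (CP X G p).2.2 < (CP X G p).1.2)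

/-- `CP(p) ∈ MFC` (*zag*). -/
def inMFC (X G : Finset Pt) (p : Pt) : Prop :=
  ((CP X G p).1.1 < p.1 ∧ p.1 ≤ (CP X G p).2.1 ∧ (CP X G p).2.2 < p.2)
  ∨ (p.1 < (CP X G p).1.1 ∧ (CP X G p).2.1 ≤ p.1 ∧ (CP X G p).2.2 < p.2)

/-- A pair is good if no point of `X` lies in the open rectangle spanned by it. -/
def IsGoodPair (X : Finset Pt) (pr : Pt × Pt) : Prop :=
  ∀ r ∈ X, ¬ inOpenRect pr.1 pr.2 r

/-- `B` is a block of `X`: the set of points of `X` whose times lie in some interval, whose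
keys form a set of consecutive integers; blocks are nonempty. -/
def IsBlock (X B : Finset Pt) : Prop :=
  B.Nonempty ∧ (∃ i j : ℤ, B = X.filter (fun p => i ≤ p.2 ∧ p.2 ≤ j)) ∧
    ∃ c d : ℤ, B.image Prod.fst = Finset.Icc c d

/-- `Top(B)`: the point of `B` with the smallest time. -/
noncomputable def TopPt (B : Finset Pt) : Pt :=
  ((B.filter (fun p => ∀ q ∈ B, p.2 ≤ q.2)).toList).headI

/-- A decomposition tree of `X`: a rooted tree whose nodes are blocks of `X`, whose root is
`X`, whose leaves are exactly the singleton blocks, and in which the children of every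
internal node partition it. -/
structure DecompTree (X : Finset Pt) where
  nodes : Finset (Finset Pt)
  parent : Finset Pt → Finset Pt
  isBlock_nodes : ∀ B ∈ nodes, IsBlock X B
  root_mem : X ∈ nodes
  parent_mem : ∀ B ∈ nodes, B ≠ X → parent B ∈ nodes
  ssubset_parent : ∀ B ∈ nodes, B ≠ X → B ⊂ parent B
  leaf_iff : ∀ B ∈ nodes, (¬ ∃ C ∈ nodes, C ≠ X ∧ parent C = B) ↔ B.card = 1
  children_partition : ∀ B ∈ nodes, B.card ≠ 1 →
    ∀ x ∈ B, ∃! C, C ∈ nodes ∧ C ≠ X ∧ parent C = B ∧ x ∈ C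

/-- The children of a node `B` in a decomposition tree. -/
noncomputable def DecompTree.children {X : Finset Pt} (T : DecompTree X) (B : Finset Pt) :
    Finset (Finset Pt) :=
  T.nodes.filter (fun C => C ≠ X ∧ T.parent C = B)

/-- `X` is `k`-decomposable: it admits a decomposition tree in which every node has at most
`k` children. -/
def kDecomposable (k : ℕ) (X : Finset Pt) : Prop :=
  ∃ T : DecompTree X, ∀ B ∈ T.nodes, (T.children B).card ≤ k

/-- `RT(p)`: the node of the decomposition tree closest to the root (i.e. containing all
others) among the nodes `B` with `Top(B) = p`. -/
noncomputable def RT {X : Finset Pt} (T : DecompTree X) (p : Pt) : Finset Pt :=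
  (((T.nodes.filter (fun B => TopPt B = p)).filter
      (fun B => ∀ C ∈ T.nodes, TopPt C = p → C ⊆ B)).toList).headI

/-- The points added by GREEDY (`G`) while processing `Top(B)` that lie to the left of
`Top(B)`. -/
noncomputable def leftSet (G B : Finset Pt) : Finset Pt :=
  G.filter (fun s => s.2 = (TopPt B).2 ∧ s.1 < (TopPt B).1)

/-- `Left(B)`: among the points added by GREEDY while processing `Top(B)` with key less than
`key (Top B)`, the one with the largest key (junk if none exists). -/
noncomputable def leftPt (G B : Finset Pt) : Pt :=
  (((leftSet G B).filter (fun s => ∀ r ∈ leftSet G B, r.1 ≤ s.1)).toList).headI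

/-- The points added by GREEDY (`G`) while processing `Top(B)` that lie to the right of
`Top(B)`. -/
noncomputable def rightSet (G B : Finset Pt) : Finset Pt :=
  G.filter (fun s => s.2 = (TopPt B).2 ∧ (TopPt B).1 < s.1)

/-- `Right(B)`: among the points added by GREEDY while processing `Top(B)` with key greater
than `key (Top B)`, the one with the smallest key (junk if none exists). -/
noncomputable def rightPt (G B : Finset Pt) : Pt :=
  (((rightSet G B).filter (fun s => ∀ r ∈ rightSet G B, s.1 ≤ r.1)).toList).headI

/-- `G` satisfies the recursion that characterises the points added by GREEDY on `X`. -/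
def IsGreedyExecution (X G : Set Pt) : Prop :=
  ∀ s, s ∈ G ↔ ∃ p ∈ X, p.2 = s.2 ∧ ∃ q ∈ X ∪ G, q.2 < s.2 ∧ q.1 = s.1 ∧ q.1 ≠ p.1 ∧
    ∀ z ∈ X ∪ G, z.2 < s.2 → inRect p q z → z = q

/-- Reflection of a point set in the time axis. -/
def mirror (S : Set Pt) : Set Pt := {p | (-p.1, p.2) ∈ S}

theorem inRect_mirror (p q z : Pt) :
    inRect (-p.1, p.2) (-q.1, q.2) (-z.1, z.2) ↔ inRect p q z := by
  simp only [inRect]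
  omega

theorem IsGreedyExecution.mirror {X G : Set Pt} (h : IsGreedyExecution X G) :
    IsGreedyExecution (mirror X) (mirror G) := by
  intro s
  have hs := h (-s.1, s.2)
  change (-s.1, s.2) ∈ G ↔ _
  rw [hs]
  constructor
  · rintro ⟨p, hp, hps, q, hq, hqs, hqk, hqp, hz⟩
    refine ⟨(-p.1, p.2), by simpa [_root_.mirror] using hp, hps, (-q.1, q.2), ?_, hqs,
      by simp only at hqk ⊢; omega, by simp only; omega, ?_⟩
    · simpa [_root_.mirror] using hq
    · intro z hzm hzs hzr
      have := hz (-z.1, z.2) hzm hzs (by simpa using (inRect_mirror _ _ _).2 hzr)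
      rw [← this]
      simp
  · rintro ⟨p, hp, hps, q, hq, hqs, hqk, hqp, hz⟩
    refine ⟨(-p.1, p.2), hp, hps, (-q.1, q.2), hq, hqs,
      by simp only; omega, by simp only; omega, ?_⟩
    intro z hzm hzs hzr
    have := hz (-z.1, z.2) (by simpa [_root_.mirror] using hzm) hzs
      (by simpa using (inRect_mirror _ _ _).2 hzr)
    rw [← this]
    simp

/-- Every point added by GREEDY lies below a point of `X`. -/
theorem IsGreedyExecution.exists_above {X G : Set Pt} (h : IsGreedyExecution X G)
    (hpos : ∀ p ∈ X, 0 < p.2) {s : Pt} (hs : s ∈ G) : ∃ x ∈ X, x.1 = s.1 ∧ x.2 < s.2 := by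
  induction hk : s.2.toNat using Nat.strong_induction_on generalizing s with
  | _ k ih =>
    obtain ⟨p, hp, hps, q, hq, hqs, hqk, -, -⟩ := (h s).1 hs
    rcases hq with hq | hq
    · exact ⟨q, hq, hqk, hqs⟩
    · have := hpos p hp
      obtain ⟨x, hx, hxk, hxs⟩ := ih q.2.toNat (by omega) hq rfl
      exact ⟨x, hx, by omega, by omega⟩

/-- While GREEDY processes the non-top points of a block with keys `[c, d]` and times `[a.2, j]`,
it adds to the left of the block only points below the rightmost point left of `a` added with
the top point `a`. -/
theorem IsGreedyExecution.eq_left_of_lt_block {X G : Set Pt} (h : IsGreedyExecution X G)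
    (hpos : ∀ p ∈ X, 0 < p.2) {a : Pt} {j c d : ℤ} (ha : a ∈ X) (haj : a.2 ≤ j)
    (hinj : ∀ p ∈ X, p.2 = a.2 → p = a)
    (hblock : ∀ p ∈ X, (a.2 ≤ p.2 ∧ p.2 ≤ j) ↔ (c ≤ p.1 ∧ p.1 ≤ d))
    {s : Pt} (hs : s ∈ G) (hsa : a.2 < s.2) (hsj : s.2 ≤ j) (hsc : s.1 < c) :
    ∃ l ∈ G, l.2 = a.2 ∧ l.1 < a.1 ∧ (∀ m ∈ G, m.2 = a.2 → m.1 < a.1 → m.1 ≤ l.1) ∧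
      s.1 = l.1 := by
  have hac := (hblock a ha).1 ⟨le_rfl, haj⟩
  have houtside : ∀ m ∈ X ∪ G, m.2 ≤ a.2 → m.1 < a.1 → m.1 < c := by
    rintro m (hm | hm) hma hmk
    · by_contra hmc
      have := (hblock m hm).2 ⟨by omega, by omega⟩
      have := hinj m hm (by omega)
      subst this
      omega
    · obtain ⟨x, hx, hxk, hxm⟩ := h.exists_above hpos hm
      by_contra hmc
      have := (hblock x hx).2 ⟨by omega, by omega⟩
      omega
  induction hk : s.2.toNat using Nat.strong_induction_on generalizing s with
  | _ k ih =>
    obtain ⟨p, hp, hps, q, hq, hqs, hqk, hqp, hempty⟩ := (h s).1 hs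
    have hpc := (hblock p hp).1 ⟨by omega, by omega⟩
    by_cases hqa : a.2 < q.2
    · rcases hq with hq | hq
      · have := (hblock q hq).1 ⟨by omega, by omega⟩
        omega
      · have := hpos a ha
        rw [← hqk]
        exact ih q.2.toNat (by omega) hq hqa (by omega) (by omega) rfl
    have hadded : ∃ m ∈ G, m.2 = a.2 ∧ m.1 < a.1 ∧ q.1 ≤ m.1 := by
      rcases lt_or_eq_of_le (not_lt.1 hqa) with hqa | hqa
      · obtain ⟨k₀, ⟨u, hu, hua, hua1, huk⟩, hkmax⟩ := Int.exists_greatest_of_bdd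
          (P := fun k => ∃ u ∈ X ∪ G, u.2 < a.2 ∧ u.1 < a.1 ∧ u.1 = k)
          ⟨a.1, by rintro z ⟨u, -, -, hu, rfl⟩; exact hu.le⟩
          ⟨q.1, q, hq, hqa, by omega, rfl⟩
        obtain ⟨t₀, ⟨v, hv, hva, hvk, hvt⟩, htmax⟩ := Int.exists_greatest_of_bdd
          (P := fun t => ∃ v ∈ X ∪ G, v.2 < a.2 ∧ v.1 = k₀ ∧ v.2 = t)
          ⟨a.2, by rintro z ⟨v, -, hv, -, rfl⟩; exact hv.le⟩
          ⟨u.2, u, hu, hua, huk, rfl⟩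
        refine ⟨(v.1, a.2), (h _).2 ⟨a, ha, rfl, v, hv, hva, rfl, by omega, ?_⟩, rfl,
          by simp only; omega, ?_⟩
        · intro z hz hza hzr
          simp only [inRect] at hzr hza
          have hzne : z.1 ≠ a.1 := by
            intro hzk
            obtain ⟨x, hx, hxk, hxz⟩ : ∃ x ∈ X, x.1 = z.1 ∧ x.2 ≤ z.2 := by
              rcases hz with hz | hz
              · exact ⟨z, hz, rfl, le_rfl⟩
              · obtain ⟨x, hx, hxk, hxz⟩ := h.exists_above hpos hz
                exact ⟨x, hx, hxk, hxz.le⟩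
            have := (hblock x hx).2 ⟨by omega, by omega⟩
            omega
          have h₁ := hkmax z.1 ⟨z, hz, hza, by omega, rfl⟩
          have h₂ := htmax z.2 ⟨z, hz, hza, by omega, rfl⟩
          exact Prod.ext (by omega) (by omega)
        · have := hkmax q.1 ⟨q, hq, hqa, by omega, rfl⟩
          simp only
          omega
      · rcases hq with hq | hq
        · have := hinj q hq hqa
          subst this
          omega
        · exact ⟨q, hq, hqa, by omega, le_rfl⟩
    obtain ⟨m, hm, hma, hmk, hqm⟩ := hadded
    obtain ⟨k₀, ⟨l, hl, hla, hlk, hlk₀⟩, hlmax⟩ := Int.exists_greatest_of_bdd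
      (P := fun k => ∃ l ∈ G, l.2 = a.2 ∧ l.1 < a.1 ∧ l.1 = k)
      ⟨a.1, by rintro z ⟨u, -, -, hu, rfl⟩; exact hu.le⟩ ⟨m.1, m, hm, hma, hmk, rfl⟩
    have hlc := houtside l (Or.inr hl) hla.le hlk
    have hml := hlmax m.1 ⟨m, hm, hma, hmk, rfl⟩
    refine ⟨l, hl, hla, hlk, fun u hu hua huk => hlk₀ ▸ hlmax u.1 ⟨u, hu, hua, huk, rfl⟩, ?_⟩
    rw [hempty l (Or.inr hl) (by omega) (by simp only [inRect]; omega), hqk]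

/-- Mirror image of `IsGreedyExecution.eq_left_of_lt_block`. -/
theorem IsGreedyExecution.eq_right_of_block_lt {X G : Set Pt} (h : IsGreedyExecution X G)
    (hpos : ∀ p ∈ X, 0 < p.2) {a : Pt} {j c d : ℤ} (ha : a ∈ X) (haj : a.2 ≤ j)
    (hinj : ∀ p ∈ X, p.2 = a.2 → p = a)
    (hblock : ∀ p ∈ X, (a.2 ≤ p.2 ∧ p.2 ≤ j) ↔ (c ≤ p.1 ∧ p.1 ≤ d))
    {s : Pt} (hs : s ∈ G) (hsa : a.2 < s.2) (hsj : s.2 ≤ j) (hsd : d < s.1) :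
    ∃ l ∈ G, l.2 = a.2 ∧ a.1 < l.1 ∧ (∀ m ∈ G, m.2 = a.2 → a.1 < m.1 → l.1 ≤ m.1) ∧
      s.1 = l.1 := by
  obtain ⟨l, hl, hla, hlk, hlmax, hsl⟩ := h.mirror.eq_left_of_lt_block (a := (-a.1, a.2))
    (j := j) (c := -d) (d := -c) (s := (-s.1, s.2)) (fun p hp => hpos (-p.1, p.2) hp)
    (by simpa [_root_.mirror] using ha) haj
    (fun p hp hpa => by
      have := hinj _ hp hpa
      rw [← this]
      simp)
    (fun p hp => by
      have := hblock _ hp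
      simp only at this ⊢
      omega)
    (by simpa [_root_.mirror] using hs) hsa hsj (by simp only; omega)
  simp only at hla hlk hsl
  refine ⟨(-l.1, l.2), hl, hla, by simp only; omega, fun m hm hma hmk => ?_, by simp only; omega⟩
  have := hlmax (-m.1, m.2) (by simpa [_root_.mirror] using hm) hma (by simp only; omega)
  simp only at this ⊢
  omega

theorem snd_eq_of_mem_greedyStep {X G : Finset Pt} {t : ℤ} {s : Pt}
    (hs : s ∈ greedyStep X G t) : s.2 = t := by
  simp only [greedyStep, mem_biUnion, mem_image] at hs
  obtain ⟨-, -, -, -, rfl⟩ := hs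
  rfl

theorem snd_le_of_mem_greedyUpTo {X : Finset Pt} {m : ℕ} {s : Pt}
    (hs : s ∈ greedyUpTo X m) : 0 < s.2 ∧ s.2 ≤ m := by
  induction m with
  | zero => simp [greedyUpTo] at hs
  | succ m ih =>
    rcases mem_union.1 hs with hs | hs
    · have := ih hs
      push_cast
      omega
    · have := snd_eq_of_mem_greedyStep hs
      push_cast
      omega

theorem mem_greedyUpTo_iff {X : Finset Pt} {m n : ℕ} (hmn : m ≤ n) (s : Pt) :
    s ∈ greedyUpTo X m ↔ s ∈ greedyUpTo X n ∧ s.2 ≤ m := by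
  induction n, hmn using Nat.le_induction with
  | base => exact ⟨fun hs => ⟨hs, (snd_le_of_mem_greedyUpTo hs).2⟩, And.left⟩
  | succ k hk ih =>
    rw [ih, greedyUpTo, mem_union]
    constructor
    · rintro ⟨hs, hsm⟩
      exact ⟨Or.inl hs, hsm⟩
    · rintro ⟨hs | hs, hsm⟩
      · exact ⟨hs, hsm⟩
      · have := snd_eq_of_mem_greedyStep hs
        omega

theorem isGreedyExecution_greedyG {n : ℕ} {X : Finset Pt}
    (htime : ∀ p ∈ X, 0 < p.2 ∧ p.2 ≤ n) :
    IsGreedyExecution (X : Set Pt) (greedyG n X : Set Pt) := by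
  have hstep : ∀ (m : ℕ) (s : Pt), m + 1 ≤ n → s.2 = (m : ℤ) + 1 →
      (s ∈ greedyG n X ↔ s ∈ greedyStep X (greedyUpTo X m) ((m : ℤ) + 1)) := by
    intro m s hm hsm
    have hmem := mem_greedyUpTo_iff (X := X) hm s
    rw [greedyUpTo, mem_union] at hmem
    push_cast at hmem
    constructor
    · intro hs
      rcases hmem.2 ⟨hs, hsm.le⟩ with hs | hs
      · have := snd_le_of_mem_greedyUpTo hs
        omega
      · exact hs
    · intro hs
      exact (hmem.1 (Or.inr hs)).1
  have hprev : ∀ (m : ℕ) (z : Pt), m + 1 ≤ n →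
      ((z ∈ X ∪ greedyUpTo X m ∧ z.2 < (m : ℤ) + 1) ↔
        (z ∈ (X : Set Pt) ∪ (greedyG n X : Set Pt) ∧ z.2 < (m : ℤ) + 1)) := by
    intro m z hm
    rw [mem_union, mem_greedyUpTo_iff (X := X) (show m ≤ n by omega) z, Int.lt_add_one_iff]
    simp only [greedyG, Set.mem_union, mem_coe]
    tauto
  intro s
  by_cases hs : 0 < s.2 ∧ s.2 ≤ n
  · obtain ⟨m, hm⟩ : ∃ m : ℕ, s.2 = (m : ℤ) + 1 := ⟨(s.2 - 1).toNat, by omega⟩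
    have hmn : m + 1 ≤ n := by omega
    rw [mem_coe, hstep m s hmn hm, greedyStep]
    simp only [mem_biUnion, mem_image, mem_filter, hprev m _ hmn, hm, mem_coe]
    constructor
    · rintro ⟨p, ⟨hp, hps⟩, q, ⟨⟨hq, hqs⟩, hqp, hz⟩, rfl⟩
      exact ⟨p, hp, hps, q, hq, hqs, rfl, hqp, fun z hzm hzs => hz z ⟨hzm, hzs⟩⟩
    · rintro ⟨p, hp, hps, q, hq, hqs, hqk, hqp, hz⟩
      exact ⟨p, ⟨hp, hps⟩, q, ⟨⟨hq, hqs⟩, hqp, fun z hzm => hz z hzm.1 hzm.2⟩,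
        Prod.ext hqk hm.symm⟩
  · constructor
    · intro h
      exact absurd (snd_le_of_mem_greedyUpTo h) hs
    · rintro ⟨p, hp, hps, -⟩
      exact absurd (hps ▸ htime p hp) hs

theorem headI_toList_mem {α : Type*} [Inhabited α] {S : Finset α} (hS : S.Nonempty) :
    S.toList.headI ∈ S := by
  have hne : S.toList ≠ [] := by simpa using hS.ne_empty
  rw [← mem_toList]
  cases hl : S.toList with
  | nil => exact absurd hl hne
  | cons a l => simp

theorem topPt_spec {B : Finset Pt} (hB : B.Nonempty) :
    TopPt B ∈ B ∧ ∀ q ∈ B, (TopPt B).2 ≤ q.2 := by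
  obtain ⟨p, hp, hmin⟩ := exists_min_image B Prod.snd hB
  exact mem_filter.1 (headI_toList_mem ⟨p, mem_filter.2 ⟨hp, hmin⟩⟩)

theorem leftPt_spec {G B : Finset Pt} (h : (leftSet G B).Nonempty) :
    leftPt G B ∈ leftSet G B ∧ ∀ m ∈ leftSet G B, m.1 ≤ (leftPt G B).1 := by
  obtain ⟨p, hp, hmax⟩ := exists_max_image (leftSet G B) Prod.fst h
  exact mem_filter.1 (headI_toList_mem ⟨p, mem_filter.2 ⟨hp, hmax⟩⟩)

theorem rightPt_spec {G B : Finset Pt} (h : (rightSet G B).Nonempty) :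
    rightPt G B ∈ rightSet G B ∧ ∀ m ∈ rightSet G B, (rightPt G B).1 ≤ m.1 := by
  obtain ⟨p, hp, hmin⟩ := exists_min_image (rightSet G B) Prod.fst h
  exact mem_filter.1 (headI_toList_mem ⟨p, mem_filter.2 ⟨hp, hmin⟩⟩)

/-- Every point of `X` is a leaf of a decomposition tree. -/
theorem DecompTree.singleton_mem {X : Finset Pt} (T : DecompTree X) {r : Pt} (hr : r ∈ X) :
    {r} ∈ T.nodes := by
  obtain ⟨B, hB, hmin⟩ := exists_min_image (T.nodes.filter (fun B => r ∈ B)) Finset.card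
    ⟨X, mem_filter.2 ⟨T.root_mem, hr⟩⟩
  obtain ⟨hBT, hrB⟩ := mem_filter.1 hB
  by_cases hcard : B.card = 1
  · obtain ⟨x, rfl⟩ := card_eq_one.1 hcard
    rw [mem_singleton.1 hrB]
    exact hBT
  · obtain ⟨C, ⟨hC, hCX, hCB, hrC⟩, -⟩ := T.children_partition B hBT hcard r hrB
    have hlt := card_lt_card (T.ssubset_parent C hC hCX)
    rw [hCB] at hlt
    exact absurd (hmin C (mem_filter.2 ⟨hC, hrC⟩)) (not_le.2 hlt)

/-- Blocks with the same top point are nested. -/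
theorem IsBlock.subset_total_of_topPt_eq {X B C : Finset Pt} (hB : IsBlock X B)
    (hC : IsBlock X C) (h : TopPt B = TopPt C) : B ⊆ C ∨ C ⊆ B := by
  have hBt := topPt_spec hB.1
  have hCt := topPt_spec hC.1
  obtain ⟨-, ⟨i, j, hBij⟩, -⟩ := hB
  obtain ⟨-, ⟨i', j', hCij⟩, -⟩ := hC
  have hmemB : ∀ p, p ∈ B ↔ p ∈ X ∧ i ≤ p.2 ∧ p.2 ≤ j := fun p => by rw [hBij, mem_filter]
  have hmemC : ∀ p, p ∈ C ↔ p ∈ X ∧ i' ≤ p.2 ∧ p.2 ≤ j' := fun p => by rw [hCij, mem_filter]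
  have hBi := (hmemB _).1 hBt.1
  have hCi := (hmemC _).1 hCt.1
  rw [h] at hBi hBt
  rcases le_total j j' with hj | hj
  · left
    intro x hx
    have hxB := (hmemB x).1 hx
    have := hBt.2 x hx
    exact (hmemC x).2 ⟨hxB.1, by omega, by omega⟩
  · right
    intro x hx
    have hxC := (hmemC x).1 hx
    have := hCt.2 x hx
    exact (hmemB x).2 ⟨hxC.1, by omega, by omega⟩

theorem RT_spec {X : Finset Pt} (T : DecompTree X) {r : Pt} (hr : r ∈ X) :
    RT T r ∈ T.nodes ∧ TopPt (RT T r) = r ∧ ∀ C ∈ T.nodes, TopPt C = r → C ⊆ RT T r := by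
  have hsingle : TopPt {r} = r := mem_singleton.1 (topPt_spec (singleton_nonempty r)).1
  obtain ⟨B, hB, hmax⟩ := exists_max_image (T.nodes.filter (fun B => TopPt B = r)) Finset.card
    ⟨{r}, mem_filter.2 ⟨T.singleton_mem hr, hsingle⟩⟩
  obtain ⟨hBT, hBr⟩ := mem_filter.1 hB
  have hne : ((T.nodes.filter (fun B => TopPt B = r)).filter
      (fun B => ∀ C ∈ T.nodes, TopPt C = r → C ⊆ B)).Nonempty := by
    refine ⟨B, mem_filter.2 ⟨hB, fun C hC hCr => ?_⟩⟩
    rcases (T.isBlock_nodes C hC).subset_total_of_topPt_eq (T.isBlock_nodes B hBT)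
      (hCr.trans hBr.symm) with h | h
    · exact h
    · exact (eq_of_subset_of_card_le h (hmax C (mem_filter.2 ⟨hC, hCr⟩))).superset
  have hmem := headI_toList_mem hne
  rw [mem_filter, mem_filter] at hmem
  exact ⟨hmem.1.1, hmem.1.2, hmem.2⟩

theorem IsPermPointSet.snd_bounds {n : ℕ} {X : Finset Pt} (hX : IsPermPointSet n X) :
    ∀ p ∈ X, 0 < p.2 ∧ p.2 ≤ n := by
  obtain ⟨σ, rfl⟩ := hX
  intro p hp
  obtain ⟨t, -, rfl⟩ := mem_image.1 hp
  have := t.isLt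
  simp only
  omega

theorem IsPermPointSet.eq_of_snd_eq {n : ℕ} {X : Finset Pt} (hX : IsPermPointSet n X)
    {p q : Pt} (hp : p ∈ X) (hq : q ∈ X) (h : p.2 = q.2) : p = q := by
  obtain ⟨σ, rfl⟩ := hX
  obtain ⟨t, -, rfl⟩ := mem_image.1 hp
  obtain ⟨u, -, rfl⟩ := mem_image.1 hq
  have : t = u := Fin.ext (by simp only at h; omega)
  rw [this]

theorem IsPermPointSet.eq_of_fst_eq {n : ℕ} {X : Finset Pt} (hX : IsPermPointSet n X)
    {p q : Pt} (hp : p ∈ X) (hq : q ∈ X) (h : p.1 = q.1) : p = q := by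
  obtain ⟨σ, rfl⟩ := hX
  obtain ⟨t, -, rfl⟩ := mem_image.1 hp
  obtain ⟨u, -, rfl⟩ := mem_image.1 hq
  have : t = u := σ.injective (Fin.ext (by simp only at h; omega))
  rw [this]

/-- Fix a decomposition tree `T` of `X`. Let `r ∈ X` with `B' := RT(r)` not
the root, and let `B` be the parent of `B'`. Then every point `s` added by GREEDY while
processing `r` lies in `BOX(B)`, or `Left(B)` exists and `s` is below `Left(B)`, or
`Right(B)` exists and `s` is below `Right(B)`. -/
theorem greedy_adds_in_box_or_below_left_right (n : ℕ) (X : Finset Pt)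
    (hX : IsPermPointSet n X) (T : DecompTree X) (r : Pt) (hr : r ∈ X)
    (hroot : RT T r ≠ X) :
    ∀ s ∈ greedyG n X, s.2 = r.2 →
      (∃ p ∈ T.parent (RT T r), ∃ q ∈ T.parent (RT T r), s.1 = p.1 ∧ s.2 = q.2) ∨
      ((leftSet (greedyG n X) (T.parent (RT T r))).Nonempty ∧
        s.1 = (leftPt (greedyG n X) (T.parent (RT T r))).1 ∧
        (leftPt (greedyG n X) (T.parent (RT T r))).2 < s.2) ∨
      ((rightSet (greedyG n X) (T.parent (RT T r))).Nonempty ∧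
        s.1 = (rightPt (greedyG n X) (T.parent (RT T r))).1 ∧
        (rightPt (greedyG n X) (T.parent (RT T r))).2 < s.2) := by
  intro s hs hsr
  obtain ⟨hRT, hRTtop, hRTmax⟩ := RT_spec T hr
  have hBT := T.parent_mem _ hRT hroot
  have hsub := T.ssubset_parent _ hRT hroot
  have hrRT : r ∈ RT T r := by
    have := (topPt_spec (T.isBlock_nodes _ hRT).1).1
    rwa [hRTtop] at this
  generalize T.parent (RT T r) = B at hBT hsub ⊢
  have hrB : r ∈ B := hsub.1 hrRT
  have htop_ne : TopPt B ≠ r := fun h => hsub.2 (hRTmax B hBT h)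
  obtain ⟨hne, ⟨i, j, hBij⟩, c, d, hcd⟩ := T.isBlock_nodes B hBT
  obtain ⟨haB, hamin⟩ := topPt_spec hne
  have hmemB : ∀ p, p ∈ B ↔ p ∈ X ∧ i ≤ p.2 ∧ p.2 ≤ j := fun p => by rw [hBij, mem_filter]
  have ha := (hmemB _).1 haB
  have hrj := (hmemB _).1 hrB
  have har : (TopPt B).2 < r.2 :=
    lt_of_le_of_ne (hamin r hrB) fun h => htop_ne (hX.eq_of_snd_eq ha.1 hr h)
  have hblock : ∀ p ∈ (X : Set Pt), ((TopPt B).2 ≤ p.2 ∧ p.2 ≤ j) ↔ (c ≤ p.1 ∧ p.1 ≤ d) := by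
    intro p hp
    rw [← mem_Icc (a := c), ← hcd, mem_image]
    constructor
    · intro h
      exact ⟨p, (hmemB p).2 ⟨hp, by omega, by omega⟩, rfl⟩
    · rintro ⟨q, hq, hqp⟩
      have := hX.eq_of_fst_eq ((hmemB q).1 hq).1 hp hqp
      subst this
      exact ⟨hamin q hq, ((hmemB q).1 hq).2.2⟩
  have hG := isGreedyExecution_greedyG hX.snd_bounds
  have hpos : ∀ p ∈ (X : Set Pt), 0 < p.2 := fun p hp => (hX.snd_bounds p hp).1
  have hinj : ∀ p ∈ (X : Set Pt), p.2 = (TopPt B).2 → p = TopPt B :=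
    fun p hp h => hX.eq_of_snd_eq hp ha.1 h
  by_cases hc : s.1 < c
  · obtain ⟨l, hl, hla, hlk, hlmax, hsl⟩ := hG.eq_left_of_lt_block hpos ha.1 ha.2.2 hinj hblock
      hs (by omega) (by omega) hc
    have hlmem : l ∈ leftSet (greedyG n X) B := mem_filter.2 ⟨hl, hla, hlk⟩
    obtain ⟨hmem, hmax⟩ := leftPt_spec ⟨l, hlmem⟩
    obtain ⟨hmG, hma, hmk⟩ := mem_filter.1 hmem
    have h₁ := hmax l hlmem
    have h₂ := hlmax _ hmG hma hmk
    exact Or.inr (Or.inl ⟨⟨l, hlmem⟩, by omega, by omega⟩)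
  by_cases hd : d < s.1
  · obtain ⟨l, hl, hla, hlk, hlmin, hsl⟩ := hG.eq_right_of_block_lt hpos ha.1 ha.2.2 hinj hblock
      hs (by omega) (by omega) hd
    have hlmem : l ∈ rightSet (greedyG n X) B := mem_filter.2 ⟨hl, hla, hlk⟩
    obtain ⟨hmem, hmin⟩ := rightPt_spec ⟨l, hlmem⟩
    obtain ⟨hmG, hma, hmk⟩ := mem_filter.1 hmem
    have h₁ := hmin l hlmem
    have h₂ := hlmin _ hmG hma hmk
    exact Or.inr (Or.inr ⟨⟨l, hlmem⟩, by omega, by omega⟩)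
  · have hs1 : s.1 ∈ B.image Prod.fst := by
      rw [hcd, mem_Icc]
      omega
    obtain ⟨p, hp, hps⟩ := mem_image.1 hs1
    exact Or.inl ⟨p, hp, r, hrB, hps.symm, hsr⟩
end

section
/- Define GR_⧅ := {CP(p) : p ∈ G, CP(p) ∈ MFC is a good pair (a, b) with key(b) < key(a)}. For every point set Y such that X ∪ Y is an arborally satisfied set, |X ∪ Y| ≥ |GR_⧅| + |X|. -/
open Finset

attribute [local instance] Classical.propDecidable

/-! ### The independent rectangle bound for rectangles of one orientation -/

/-- For `R = (a, b)`, the open rectangle with upper left corner `b` and lower right corner `a`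
contains `(x, y)`. -/
def InsideNW (R : Pt × Pt) (x y : ℤ) : Prop :=
  R.2.1 < x ∧ x < R.1.1 ∧ R.2.2 < y ∧ y < R.1.2

/-- A set of rectangles `(a, b)` with `b` to the upper left of `a` and corners in `X`, such that no
corner of one of them is strictly inside another. -/
structure IndepNW (X : Finset Pt) (I : Finset (Pt × Pt)) : Prop where
  fst_mem : ∀ R ∈ I, R.1 ∈ X
  snd_mem : ∀ R ∈ I, R.2 ∈ X
  key_lt : ∀ R ∈ I, R.2.1 < R.1.1
  time_lt : ∀ R ∈ I, R.2.2 < R.1.2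
  corner_fst : ∀ R ∈ I, ∀ R' ∈ I, ¬ InsideNW R' R.1.1 R.1.2
  corner_snd : ∀ R ∈ I, ∀ R' ∈ I, ¬ InsideNW R' R.2.1 R.2.2
  corner_ne : ∀ R ∈ I, ∀ R' ∈ I, ¬ InsideNW R' R.1.1 R.2.2
  corner_sw : ∀ R ∈ I, ∀ R' ∈ I, ¬ InsideNW R' R.2.1 R.1.2

/-- The points of `X` have distinct keys and distinct times. -/
structure InGeneralPosition (X : Finset Pt) : Prop where
  key_inj : ∀ x ∈ X, ∀ y ∈ X, x.1 = y.1 → x = y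
  time_inj : ∀ x ∈ X, ∀ y ∈ X, x.2 = y.2 → x = y

/-- The interiors of two rectangles intersect. -/
def OverlapNW (R R' : Pt × Pt) : Prop :=
  R.2.1 < R'.1.1 ∧ R'.2.1 < R.1.1 ∧ R.2.2 < R'.1.2 ∧ R'.2.2 < R.1.2

/-- A narrower rectangle overlapping an independent one crosses it from top to bottom. -/
theorem IndepNW.crosses {X : Finset Pt} {I : Finset (Pt × Pt)} (hI : IndepNW X I)
    (hX : InGeneralPosition X) {R R' : Pt × Pt} (hR : R ∈ I) (hR' : R' ∈ I)
    (hw : R'.1.1 - R'.2.1 ≤ R.1.1 - R.2.1) (ho : OverlapNW R R') :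
    R.2.1 ≤ R'.2.1 ∧ R'.1.1 ≤ R.1.1 ∧ R'.2.2 ≤ R.2.2 ∧ R.1.2 ≤ R'.1.2 := by
  have ha := hI.fst_mem R hR
  have hb := hI.snd_mem R hR
  have ha' := hI.fst_mem R' hR'
  have hb' := hI.snd_mem R' hR'
  have k1 := hI.key_lt R hR
  have k2 := hI.key_lt R' hR'
  have t1 := hI.time_lt R hR
  have t2 := hI.time_lt R' hR'
  have c1 := hI.corner_fst R hR R' hR'
  have c2 := hI.corner_snd R hR R' hR'
  have c3 := hI.corner_ne R hR R' hR'
  have c4 := hI.corner_sw R hR R' hR'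
  have d1 := hI.corner_fst R' hR' R hR
  have d2 := hI.corner_snd R' hR' R hR
  have d3 := hI.corner_ne R' hR' R hR
  have d4 := hI.corner_sw R' hR' R hR
  have ea : R.1.1 = R'.1.1 ↔ R.1.2 = R'.1.2 :=
    ⟨fun h => by rw [hX.key_inj _ ha _ ha' h], fun h => by rw [hX.time_inj _ ha _ ha' h]⟩
  have eb : R.2.1 = R'.2.1 ↔ R.2.2 = R'.2.2 :=
    ⟨fun h => by rw [hX.key_inj _ hb _ hb' h], fun h => by rw [hX.time_inj _ hb _ hb' h]⟩
  unfold InsideNW at *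
  unfold OverlapNW at ho
  omega

/-- Every rectangle of an independent family is crossed by a vertical strip that avoids all
narrower rectangles overlapping it. -/
theorem IndepNW.exists_strip {X : Finset Pt} {I : Finset (Pt × Pt)} (hI : IndepNW X I)
    (hX : InGeneralPosition X) {R : Pt × Pt} (hR : R ∈ I) :
    ∃ l : ℤ, R.2.1 ≤ l ∧ l < R.1.1 ∧ ∀ R' ∈ I, R' ≠ R → R'.1.1 - R'.2.1 ≤ R.1.1 - R.2.1 →
      OverlapNW R R' → ¬ (R'.2.1 ≤ l ∧ l < R'.1.1) := by
  set C := I.filter (fun R' => R' ≠ R ∧ R'.1.1 - R'.2.1 ≤ R.1.1 - R.2.1 ∧ OverlapNW R R' ∧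
    R'.2.1 = R.2.1) with hC
  rcases C.eq_empty_or_nonempty with hemp | hne
  · refine ⟨R.2.1, le_rfl, hI.key_lt R hR, fun R' hR' hRR hw ho hl => ?_⟩
    have hc := hI.crosses hX hR hR' hw ho
    have : R' ∈ C := by
      rw [hC, mem_filter]
      exact ⟨hR', hRR, hw, ho, by omega⟩
    simp [hemp] at this
  · obtain ⟨M, hM, hmax⟩ := C.exists_max_image (fun R' => R'.1.1) hne
    rw [hC, mem_filter] at hM
    obtain ⟨hMI, hMR, hMw, hMo, hMk⟩ := hM
    have hMc := hI.crosses hX hR hMI hMw hMo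
    have hMlt := hI.key_lt M hMI
    refine ⟨M.1.1, by omega, lt_of_le_of_ne hMc.2.1 fun h => hMR (Prod.ext
      (hX.key_inj _ (hI.fst_mem M hMI) _ (hI.fst_mem R hR) h)
      (hX.key_inj _ (hI.snd_mem M hMI) _ (hI.snd_mem R hR) hMk)), ?_⟩
    intro R' hR' hRR hw ho hl
    have hc := hI.crosses hX hR hR' hw ho
    have ht := hI.time_lt R hR
    have hne1 : R'.2.1 ≠ R.2.1 := by
      intro h
      have := hmax R' (by rw [hC, mem_filter]; exact ⟨hR', hRR, hw, ho, h⟩)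
      omega
    have hne2 : R'.2.1 ≠ M.1.1 := by
      intro h
      have := hX.key_inj _ (hI.snd_mem R' hR') _ (hI.fst_mem M hMI) h
      have : R'.2.2 = M.1.2 := by rw [this]
      omega
    have hov : OverlapNW M R' := by unfold OverlapNW; omega
    have hov' : OverlapNW R' M := by unfold OverlapNW; omega
    rcases le_total (R'.1.1 - R'.2.1) (M.1.1 - M.2.1) with h | h
    · have := hI.crosses hX hMI hR' h hov
      omega
    · have := hI.crosses hX hR' hMI h hov'
      omega

/-- In an arborally satisfied set, a vertical strip between two points `b` and `a` separates two
horizontally consecutive points inside their rectangle. -/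
theorem ArbSat.exists_consecutive {S : Finset Pt} (hS : ArbSat S) {a b : Pt} (ha : a ∈ S)
    (hb : b ∈ S) (ht : b.2 ≤ a.2) {l : ℤ} (hbl : b.1 ≤ l) (hla : l < a.1) :
    ∃ u ∈ S, ∃ v ∈ S, u.2 = v.2 ∧ b.1 ≤ u.1 ∧ u.1 ≤ l ∧ l < v.1 ∧ v.1 ≤ a.1 ∧
      b.2 ≤ u.2 ∧ u.2 ≤ a.2 ∧ ∀ r ∈ S, r.2 = u.2 → u.1 < r.1 → v.1 ≤ r.1 := by
  set C := (S ×ˢ S).filter (fun w => b.1 ≤ w.1.1 ∧ w.1.1 ≤ l ∧ l < w.2.1 ∧ w.2.1 ≤ a.1 ∧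
    b.2 ≤ w.1.2 ∧ w.1.2 ≤ w.2.2 ∧ w.2.2 ≤ a.2) with hC
  have hne : C.Nonempty := ⟨(b, a), by
    rw [hC, mem_filter, mem_product]
    exact ⟨⟨hb, ha⟩, le_rfl, hbl, hla, le_rfl, le_rfl, ht, le_rfl⟩⟩
  obtain ⟨⟨u, v⟩, huv, hmin⟩ :=
    C.exists_min_image (fun w => (w.2.2 - w.1.2) + (w.2.1 - w.1.1)) hne
  rw [hC, mem_filter, mem_product] at huv
  obtain ⟨⟨hu, hv⟩, h1, h2, h3, h4, h5, h6, h7⟩ := huv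
  dsimp only at hu hv h1 h2 h3 h4 h5 h6 h7
  have key : ∀ r ∈ S, u.1 ≤ r.1 → r.1 ≤ v.1 → u.2 ≤ r.2 → r.2 ≤ v.2 → r = u ∨ r = v := by
    intro r hr g1 g2 g3 g4
    rcases le_or_gt r.1 l with h | h
    · have := hmin (r, v) (by
        rw [hC, mem_filter, mem_product]
        refine ⟨⟨hr, hv⟩, ?_⟩
        dsimp only
        omega)
      dsimp only at this
      exact Or.inl (Prod.ext (by omega) (by omega))
    · have := hmin (u, r) (by
        rw [hC, mem_filter, mem_product]
        refine ⟨⟨hu, hr⟩, ?_⟩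
        dsimp only
        omega)
      dsimp only at this
      exact Or.inr (Prod.ext (by omega) (by omega))
  have hrow : u.2 = v.2 := by
    rcases hS u hu v hv with h | h | ⟨r, hr, hru, hrv, hrect⟩
    · omega
    · exact h
    · unfold inRect at hrect
      rcases key r hr (by omega) (by omega) (by omega) (by omega) with h | h
      · exact absurd h hru
      · exact absurd h hrv
  refine ⟨u, hu, v, hv, hrow, h1, h2, h3, h4, h5, by omega, fun r hr hr2 hlt => ?_⟩
  by_contra! hcon
  rcases key r hr (by omega) (by omega) (by omega) (by omega) with h | h
  · rw [h] at hlt; omega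
  · rw [h] at hcon; omega

/-- An arborally satisfied superset of `X` has at least as many additional points as there are
rectangles in an independent family. -/
theorem IndepNW.card_add_card_le {X S : Finset Pt} {I : Finset (Pt × Pt)} (hI : IndepNW X I)
    (hX : InGeneralPosition X) (hXS : X ⊆ S) (hS : ArbSat S) : I.card + X.card ≤ S.card := by
  have hcharge : ∀ R : Pt × Pt, ∃ l : ℤ, ∃ u v : Pt, R ∈ I →
      (∀ R' ∈ I, R' ≠ R → R'.1.1 - R'.2.1 ≤ R.1.1 - R.2.1 →
        OverlapNW R R' → ¬ (R'.2.1 ≤ l ∧ l < R'.1.1)) ∧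
      u ∈ S ∧ v ∈ S ∧ u.2 = v.2 ∧ R.2.1 ≤ u.1 ∧ u.1 ≤ l ∧ l < v.1 ∧ v.1 ≤ R.1.1 ∧
      R.2.2 ≤ u.2 ∧ u.2 ≤ R.1.2 ∧ ∀ r ∈ S, r.2 = u.2 → u.1 < r.1 → v.1 ≤ r.1 := by
    intro R
    by_cases hR : R ∈ I
    · obtain ⟨l, hl1, hl2, hl⟩ := hI.exists_strip hX hR
      obtain ⟨u, hu, v, hv, h⟩ := hS.exists_consecutive (hXS (hI.fst_mem R hR))
        (hXS (hI.snd_mem R hR)) (hI.time_lt R hR).le hl1 hl2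
      exact ⟨l, u, v, fun _ => ⟨hl, hu, hv, h⟩⟩
    · exact ⟨0, 0, 0, fun h => absurd h hR⟩
  choose l u v hluv using hcharge
  have hinj : ∀ R ∈ I, ∀ R' ∈ I, u R = u R' →
      R'.1.1 - R'.2.1 ≤ R.1.1 - R.2.1 → R' = R := by
    intro R hR R' hR' huu hw
    obtain ⟨hl, hu, hv, h1, h2, h3, h4, h5, h6, h7, h8⟩ := hluv R hR
    obtain ⟨-, hu', hv', g1, g2, g3, g4, g5, g6, g7, g8⟩ := hluv R' hR'
    rw [← huu] at hu' g1 g2 g3 g6 g7 g8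
    have e1 := h8 _ hv' (by omega) (by omega)
    have e2 := g8 _ hv (by omega) (by omega)
    by_contra hne
    have n1 : R.2.2 ≠ R'.1.2 := fun h => by
      have := hX.time_inj _ (hI.snd_mem R hR) _ (hI.fst_mem R' hR') h
      have : R.2.1 = R'.1.1 := by rw [this]
      omega
    have n2 : R'.2.2 ≠ R.1.2 := fun h => by
      have := hX.time_inj _ (hI.snd_mem R' hR') _ (hI.fst_mem R hR) h
      have : R'.2.1 = R.1.1 := by rw [this]
      omega
    exact hl R' hR' hne hw (by unfold OverlapNW; omega) (by omega)
  have hlast : ∀ x : Pt, ∃ m : Pt, x ∈ X → m ∈ S ∧ m.2 = x.2 ∧ ∀ r ∈ S, r.2 = x.2 → r.1 ≤ m.1 := by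
    intro x
    by_cases hx : x ∈ X
    · obtain ⟨m, hm, hmax⟩ := (S.filter (fun r => r.2 = x.2)).exists_max_image Prod.fst
        ⟨x, mem_filter.2 ⟨hXS hx, rfl⟩⟩
      rw [mem_filter] at hm
      exact ⟨m, fun _ => ⟨hm.1, hm.2, fun r hr h => hmax r (mem_filter.2 ⟨hr, h⟩)⟩⟩
    · exact ⟨0, fun h => absurd h hx⟩
  choose m hm using hlast
  have hcI : (I.image u).card = I.card := card_image_of_injOn fun R hR R' hR' h => by
    rcases le_total (R'.1.1 - R'.2.1) (R.1.1 - R.2.1) with hw | hw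
    · exact (hinj R hR R' hR' h hw).symm
    · exact hinj R' hR' R hR h.symm hw
  have hcX : (X.image m).card = X.card := card_image_of_injOn fun x hx y hy h =>
    hX.time_inj x hx y hy (by rw [← (hm x hx).2.1, ← (hm y hy).2.1, h])
  have hdisj : Disjoint (I.image u) (X.image m) := by
    rw [disjoint_left]
    intro w hw hw'
    obtain ⟨R, hR, rfl⟩ := mem_image.1 hw
    obtain ⟨x, hx, hxu⟩ := mem_image.1 hw'
    obtain ⟨-, -, hv, h1, -, h3, h4, -⟩ := hluv R hR
    obtain ⟨-, h6, h7⟩ := hm x hx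
    have := h7 _ hv (by rw [← h6, hxu, h1])
    rw [hxu] at this
    omega
  rw [← hcI, ← hcX, ← card_union_of_disjoint hdisj]
  refine card_le_card (union_subset ?_ ?_)
  · exact image_subset_iff.2 fun R hR => (hluv R hR).2.1
  · exact image_subset_iff.2 fun x hx => (hm x hx).1

/-! ### The points added by GREEDY -/

theorem IsPermPointSet.inGeneralPosition {n : ℕ} {X : Finset Pt} (hX : IsPermPointSet n X) :
    InGeneralPosition X := by
  obtain ⟨σ, rfl⟩ := hX
  constructor <;> intro x hx y hy h <;>
    obtain ⟨i, -, rfl⟩ := mem_image.1 hx <;> obtain ⟨j, -, rfl⟩ := mem_image.1 hy <;>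
    dsimp only at h
  · have : σ i = σ j := Fin.ext (by omega)
    rw [σ.injective this]
  · have : i = j := Fin.ext (by omega)
    rw [this]

theorem IsPermPointSet.time_mem {n : ℕ} {X : Finset Pt} (hX : IsPermPointSet n X) {x : Pt}
    (hx : x ∈ X) : ∃ i < n, x.2 = (i : ℤ) + 1 := by
  obtain ⟨σ, rfl⟩ := hX
  obtain ⟨i, -, rfl⟩ := mem_image.1 hx
  exact ⟨i, i.2, rfl⟩

theorem mem_greedyStep {X G : Finset Pt} {t : ℤ} {r : Pt} :
    r ∈ greedyStep X G t ↔ r.2 = t ∧ ∃ s ∈ X, s.2 = t ∧ ∃ q ∈ X ∪ G, q.2 < t ∧ q.1 = r.1 ∧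
      q.1 ≠ s.1 ∧ ∀ w ∈ X ∪ G, w.2 < t → inRect s q w → w = q := by
  simp only [greedyStep, mem_biUnion, mem_image, mem_filter]
  constructor
  · rintro ⟨s, ⟨hs, hst⟩, q, ⟨⟨hq, hqt⟩, hne, hemp⟩, rfl⟩
    exact ⟨rfl, s, hs, hst, q, hq, hqt, rfl, hne, fun w hw hwt => hemp w ⟨hw, hwt⟩⟩
  · rintro ⟨hrt, s, hs, hst, q, hq, hqt, hqr, hne, hemp⟩
    exact ⟨s, ⟨hs, hst⟩, q, ⟨⟨hq, hqt⟩, hne, fun w hw => hemp w hw.1 hw.2⟩,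
      Prod.ext hqr hrt.symm⟩

theorem mem_greedyUpTo {X : Finset Pt} {m : ℕ} {r : Pt} :
    r ∈ greedyUpTo X m ↔ ∃ i < m, r ∈ greedyStep X (greedyUpTo X i) ((i : ℤ) + 1) := by
  induction m with
  | zero => simp [greedyUpTo]
  | succ m ih =>
    rw [greedyUpTo, mem_union, ih]
    constructor
    · rintro (⟨i, hi, h⟩ | h)
      · exact ⟨i, by omega, h⟩
      · exact ⟨m, by omega, h⟩
    · rintro ⟨i, hi, h⟩
      rcases Nat.lt_succ_iff_lt_or_eq.1 hi with hi | rfl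
      · exact Or.inl ⟨i, hi, h⟩
      · exact Or.inr h

theorem mem_greedyUpTo_iff_of_le {X : Finset Pt} {i m : ℕ} (him : i ≤ m) {r : Pt}
    (hr : r.2 < (i : ℤ) + 1) : r ∈ greedyUpTo X i ↔ r ∈ greedyUpTo X m := by
  simp only [mem_greedyUpTo]
  constructor
  · rintro ⟨j, hj, h⟩
    exact ⟨j, by omega, h⟩
  · rintro ⟨j, hj, h⟩
    have := (mem_greedyStep.1 h).1
    exact ⟨j, by omega, h⟩

/-- The points added by GREEDY, described in terms of its full output. -/
theorem mem_greedyG {n : ℕ} {X : Finset Pt} (hX : IsPermPointSet n X) {r : Pt} :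
    r ∈ greedyG n X ↔ ∃ s ∈ X, s.2 = r.2 ∧ ∃ q ∈ X ∪ greedyG n X, q.2 < r.2 ∧ q.1 = r.1 ∧
      q.1 ≠ s.1 ∧ ∀ w ∈ X ∪ greedyG n X, w.2 < r.2 → inRect s q w → w = q := by
  have hS : ∀ i < n, ∀ w : Pt, w.2 < (i : ℤ) + 1 →
      (w ∈ X ∪ greedyUpTo X i ↔ w ∈ X ∪ greedyG n X) := by
    intro i hi w hw
    rw [mem_union, mem_union, greedyG, mem_greedyUpTo_iff_of_le hi.le hw]
  constructor
  · intro hr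
    obtain ⟨i, hi, h⟩ := mem_greedyUpTo.1 hr
    obtain ⟨ht, s, hs, hst, q, hq, hqt, hqr, hne, hemp⟩ := mem_greedyStep.1 h
    refine ⟨s, hs, by rw [hst, ht], q, (hS i hi q hqt).1 hq, by rw [ht]; exact hqt, hqr, hne, ?_⟩
    intro w hw hwt
    rw [ht] at hwt
    exact hemp w ((hS i hi w hwt).2 hw) hwt
  · rintro ⟨s, hs, hst, q, hq, hqt, hqr, hne, hemp⟩
    obtain ⟨i, hi, hsi⟩ := hX.time_mem hs
    have hri : r.2 = (i : ℤ) + 1 := by rw [← hst, hsi]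
    rw [hri] at hqt
    refine mem_greedyUpTo.2 ⟨i, hi, mem_greedyStep.2 ⟨hri, s, hs, hsi, q, (hS i hi q hqt).2 hq,
      hqt, hqr, hne, ?_⟩⟩
    intro w hw hwt
    exact hemp w ((hS i hi w hwt).1 hw) (by rw [hri]; exact hwt)

theorem OP_eq {X : Finset Pt} (hX : InGeneralPosition X) {r x : Pt} (hx : x ∈ X)
    (h : x.2 = r.2) : OP X r = x := by
  have : X.filter (fun p => p.2 = r.2) = {x} := by
    ext y
    rw [mem_filter, mem_singleton]
    constructor
    · rintro ⟨hy, hyr⟩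
      exact hX.time_inj y hy x hx (hyr.trans h.symm)
    · rintro rfl
      exact ⟨hx, h⟩
  rw [OP, this, toList_singleton, List.headI]

theorem firstAbove_spec {S : Finset Pt} {p q : Pt} (hq : q ∈ S) (hk : q.1 = p.1)
    (ht : q.2 < p.2) : firstAbove S p ∈ S ∧ (firstAbove S p).2 < p.2 ∧
      ∀ r ∈ S, r.1 = p.1 → r.2 < p.2 → r.2 ≤ (firstAbove S p).2 := by
  set T := (S.filter (fun q => q.1 = p.1 ∧ q.2 < p.2)).image Prod.snd with hT
  have hmem : ∀ r ∈ S, r.1 = p.1 → r.2 < p.2 → r.2 ∈ T := fun r hr h1 h2 =>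
    mem_image_of_mem _ (mem_filter.2 ⟨hr, h1, h2⟩)
  obtain ⟨m, hm⟩ := max_of_mem (hmem q hq hk ht)
  have hfa : firstAbove S p = (p.1, m) := by
    rw [firstAbove, ← hT, hm, WithBot.unbotD_coe]
  obtain ⟨w, hw, rfl⟩ := mem_image.1 (mem_of_max hm)
  rw [mem_filter] at hw
  have hwp : firstAbove S p = w := by rw [hfa, ← hw.2.1]
  rw [hwp]
  exact ⟨hw.1, hw.2.2, fun r hr h1 h2 => le_max_of_eq (hmem r hr h1 h2) hm⟩

/-- The pair `R = (a, b)` is a good pair, `b` is to the upper left of `a`, and for some key `k`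
between them GREEDY touches `k` when processing `b` and next when processing `a`. -/
structure IsGoodZagNW (X S : Finset Pt) (R : Pt × Pt) : Prop where
  fst_mem : R.1 ∈ X
  snd_mem : R.2 ∈ X
  key_lt : R.2.1 < R.1.1
  time_lt : R.2.2 < R.1.2
  good : ∀ r ∈ X, ¬ InsideNW R r.1 r.2
  touch : ∃ k, R.2.1 ≤ k ∧ k < R.1.1 ∧ (k, R.2.2) ∈ S ∧ (k, R.1.2) ∈ S ∧
    ∀ r ∈ S, k ≤ r.1 → r.1 ≤ R.1.1 → R.2.2 ≤ r.2 → r.2 < R.1.2 → r = (k, R.2.2)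

theorem isGoodZagNW_CP {n : ℕ} {X : Finset Pt} (hX : IsPermPointSet n X) {p : Pt}
    (hp : p ∈ greedyG n X) (hmfc : inMFC X (greedyG n X) p)
    (hgood : IsGoodPair X (CP X (greedyG n X) p))
    (hlt : (CP X (greedyG n X) p).2.1 < (CP X (greedyG n X) p).1.1) :
    IsGoodZagNW X (X ∪ greedyG n X) (CP X (greedyG n X) p) := by
  have hgp := hX.inGeneralPosition
  obtain ⟨a, ha, hat, q, hq, hqt, hqk, hqa, hemp⟩ := (mem_greedyG hX).1 hp
  obtain ⟨hfS, hft, hfmax⟩ := firstAbove_spec hq hqk hqt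
  have hfk : (firstAbove (X ∪ greedyG n X) p).1 = p.1 := rfl
  obtain ⟨b, hb, hbt⟩ : ∃ b ∈ X, b.2 = (firstAbove (X ∪ greedyG n X) p).2 := by
    rcases mem_union.1 hfS with h | h
    · exact ⟨_, h, rfl⟩
    · obtain ⟨b, hb, hbt, -⟩ := (mem_greedyG hX).1 h
      exact ⟨b, hb, hbt⟩
  have hCP : CP X (greedyG n X) p = (a, b) := by
    rw [CP, OP_eq hgp ha hat, OP_eq hgp hb hbt]
  unfold inMFC at hmfc
  rw [hCP] at hmfc hgood hlt ⊢
  generalize firstAbove (X ∪ greedyG n X) p = f at *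
  dsimp only at hmfc hlt
  have hfe : f = (p.1, b.2) := Prod.ext hfk hbt.symm
  have hqf := hfmax q hq hqk hqt
  have hfq : f = q := hemp f hfS hft (by unfold inRect; omega)
  refine ⟨ha, hb, hlt, by dsimp only; omega, ?_, p.1, by dsimp only; omega, by dsimp only; omega,
    hfe ▸ hfS, ?_, ?_⟩
  · intro r hr hin
    refine hgood r hr ?_
    unfold InsideNW at hin
    unfold inOpenRect
    dsimp only at hin ⊢
    omega
  · dsimp only
    rw [hat]
    exact mem_union_right _ hp
  · intro r hr h1 h2 h3 h4
    dsimp only at h1 h2 h3 h4 ⊢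
    rw [← hfq] at hemp
    rw [← hfe]
    exact hemp r hr (by omega) (by unfold inRect; omega)

/-- The upper right corner of one good zag pair is not strictly inside another. -/
theorem IsGoodZagNW.corner_ne {n : ℕ} {X : Finset Pt} (hX : IsPermPointSet n X)
    {R R' : Pt × Pt} (hR : IsGoodZagNW X (X ∪ greedyG n X) R)
    (hR' : IsGoodZagNW X (X ∪ greedyG n X) R') : ¬ InsideNW R' R.1.1 R.2.2 := by
  rintro ⟨i1, i2, i3, i4⟩
  have hgp := hX.inGeneralPosition
  have htt : R'.1.2 < R.1.2 := by
    have h1 := hR'.good _ hR.fst_mem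
    have h2 := hR.time_lt
    have h3 : R.1.2 ≠ R'.1.2 := fun h => by
      rw [hgp.time_inj _ hR.fst_mem _ hR'.fst_mem h] at i2
      omega
    unfold InsideNW at h1
    omega
  obtain ⟨k, hk1, hk2, hkb, hka, hE⟩ := hR.touch
  obtain ⟨k', hk1', hk2', hkb', hka', hE'⟩ := hR'.touch
  have hkk : k < k' := by
    by_contra! h
    have := congrArg Prod.snd (hE' _ hkb h (by dsimp only; omega) (by dsimp only; omega)
      (by dsimp only; omega))
    dsimp only at this
    omega
  have hak : R.1.1 < k' := by
    by_contra! h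
    have := congrArg Prod.snd (hE _ hka' hkk.le h (by dsimp only; omega) (by dsimp only; omega))
    dsimp only at this
    omega
  -- GREEDY does not touch `k` when processing `R'.1`, so a point to its right blocks the view.
  have hblock : ∃ r ∈ X ∪ greedyG n X,
      R.1.1 < r.1 ∧ r.1 < k' ∧ R'.2.2 < r.2 ∧ r.2 < R'.1.2 := by
    by_contra! hno
    have hmem : ((k, R'.1.2) : Pt) ∈ greedyG n X := by
      refine (mem_greedyG hX).2 ⟨R'.1, hR'.fst_mem, rfl, (k, R.2.2), hkb, i4, rfl,
        by dsimp only; omega, fun w hw hwt hrect => ?_⟩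
      unfold inRect at hrect
      dsimp only at hwt hrect
      rcases le_or_gt w.1 R.1.1 with h | h
      · exact hE w hw (by omega) h (by omega) (by omega)
      · rcases lt_or_ge w.1 k' with h' | h'
        · have := hno w hw h h' (by omega)
          omega
        · have := congrArg Prod.snd (hE' w hw h' (by omega) (by omega) hwt)
          dsimp only at this
          omega
    have := congrArg Prod.snd (hE _ (mem_union_right _ hmem) le_rfl (by dsimp only; omega)
      (by dsimp only; omega) (by dsimp only; omega))
    dsimp only at this
    omega
  obtain ⟨r₀, hr₀, hr₀'⟩ := hblock
  obtain ⟨r, hr, hmin⟩ := ((X ∪ greedyG n X).filter (fun r =>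
    R.1.1 < r.1 ∧ r.1 < k' ∧ R'.2.2 < r.2 ∧ r.2 < R'.1.2)).exists_min_image Prod.snd
    ⟨r₀, mem_filter.2 ⟨hr₀, hr₀'⟩⟩
  rw [mem_filter] at hr
  obtain ⟨hr, g1, g2, g3, g4⟩ := hr
  rcases mem_union.1 hr with hrX | hrG
  · exact hR'.good r hrX ⟨by omega, by omega, g3, g4⟩
  · obtain ⟨s, hs, hst, q, hq, hqt, hqk, -, hemp⟩ := (mem_greedyG hX).1 hrG
    have hqb : q.2 ≤ R'.2.2 := by
      by_contra! h
      have := hmin q (mem_filter.2 ⟨hq, by omega, by omega, h, by omega⟩)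
      omega
    have hs' := hR'.good s hs
    unfold InsideNW at hs'
    rcases le_or_gt s.1 R'.2.1 with h | h
    · have := hemp R'.2 (mem_union_left _ hR'.snd_mem) (by omega) (by unfold inRect; omega)
      have : R'.2.1 = q.1 := by rw [this]
      omega
    · have := congrArg Prod.fst (hemp _ hkb' (by dsimp only; omega)
        (by unfold inRect; dsimp only; omega))
      dsimp only at this
      omega

theorem indepNW_of_isGoodZagNW {n : ℕ} {X : Finset Pt} (hX : IsPermPointSet n X)
    {I : Finset (Pt × Pt)} (hI : ∀ R ∈ I, IsGoodZagNW X (X ∪ greedyG n X) R) : IndepNW X I where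
  fst_mem R hR := (hI R hR).fst_mem
  snd_mem R hR := (hI R hR).snd_mem
  key_lt R hR := (hI R hR).key_lt
  time_lt R hR := (hI R hR).time_lt
  corner_fst R hR R' hR' := (hI R' hR').good _ (hI R hR).fst_mem
  corner_snd R hR R' hR' := (hI R' hR').good _ (hI R hR).snd_mem
  corner_ne R hR R' hR' := (hI R hR).corner_ne hX (hI R' hR')
  corner_sw R hR R' hR' := by
    have hgp := hX.inGeneralPosition
    have h1 := (hI R' hR').good _ (hI R hR).fst_mem
    have h2 := (hI R' hR').good _ (hI R hR).snd_mem
    have h3 := (hI R' hR').corner_ne hX (hI R hR)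
    have k1 := (hI R hR).key_lt
    have t1 := (hI R hR).time_lt
    have ea : R.1.1 = R'.1.1 → R.1.2 = R'.1.2 := fun h => by
      rw [hgp.key_inj _ (hI R hR).fst_mem _ (hI R' hR').fst_mem h]
    have eb : R.2.2 = R'.2.2 → R.2.1 = R'.2.1 := fun h => by
      rw [hgp.time_inj _ (hI R hR).snd_mem _ (hI R' hR').snd_mem h]
    unfold InsideNW at *
    omega

/-- Let `GR_⧅` be the set of pairs `CP(p)`, `p ∈ G`, that are good pairs
`(a, b)` of `MFC` with `key(b) < key(a)`. For every point set `Y` such that `X ∪ Y` is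
arborally satisfied, `|X ∪ Y| ≥ |GR_⧅| + |X|`. -/
theorem good_pairs_nw_lower_bound (n : ℕ) (X : Finset Pt) (hX : IsPermPointSet n X)
    (Y : Finset Pt) (hsat : ArbSat (X ∪ Y)) :
    (((greedyG n X).filter (fun p => inMFC X (greedyG n X) p ∧
        IsGoodPair X (CP X (greedyG n X) p) ∧
        (CP X (greedyG n X) p).2.1 < (CP X (greedyG n X) p).1.1)).image
      (CP X (greedyG n X))).card + X.card ≤ (X ∪ Y).card := by
  refine (indepNW_of_isGoodZagNW hX fun R hR => ?_).card_add_card_le hX.inGeneralPosition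
    subset_union_left hsat
  obtain ⟨p, hp, rfl⟩ := mem_image.1 hR
  rw [mem_filter] at hp
  obtain ⟨hp, hmfc, hgood, hlt⟩ := hp
  exact isGoodZagNW_CP hX hp hmfc hgood hlt
end
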